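/- Let D=(V,A) be a tournament. Then (number of Hamiltonian paths of D) ≡ 1 + 2·(number of nontrivial odd D-cycles) (mod 4), where a D-cycle is called odd if its length is odd and nontrivial if its length is greater than 1, and where by convention the empty list counts as a Hamiltonian path of the empty tournament. -/

import Mathlib

/-!
Let `t v` be commuting variables with `t v ^ 2 = 0`, let `X` be the diagonal matrix of the `t v`,
`A` the adjacency matrix and `J` the all-ones matrix. Since squares vanish, the generating function
`H` of all paths (each weighted by the product of its vertices) is that of all walks, and the matrix
determinant lemma gives `H * det (1 - X A) = det (1 - X A + X J)` (`pathGF_mul_det`).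
For a tournament `J - A = 1 + Aᵀ`, so the right-hand side is
`det ((1 + X) (1 + X Aᵀ)) = ∏ (1 + t v) * det (1 + X A)` (`tournament_det`).

Both determinants expand over permutations all of whose nontrivial cycles are cycles of the digraph,
and they differ only in signs. Modulo `4`, `det (1 + X A) = det (1 - X A) * (1 + 2 C)` with `C` the
generating function of the nontrivial odd cycles (`det_add_eq`): in a permutation, the number of odd
cycles has the parity of the number of moved points. Since `det (1 - X A)` is a unit,
`H = ∏ (1 + t v) * (1 + 2 C)` modulo `4`, and the theorem is the coefficient of `∏ t v`: it
counts Hamiltonian paths on the left, while on the right each odd cycle is completed by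
`∏ (1 + t v)` in exactly one way.
-/

open scoped Classical

noncomputable section

/-- The power sum `p_k = x_1^k + x_2^k + ⋯` as a formal power series over `R`
in countably many variables indexed by the positive integers. -/
def pSumR (R : Type) [CommRing R] (k : ℕ) : MvPowerSeries ℕ+ R :=
  fun d => if ∃ i : ℕ+, d = Finsupp.single i k then 1 else 0

/-- The power sum `p_k` over `ℤ`. -/
def pSum (k : ℕ) : MvPowerSeries ℕ+ ℤ := pSumR ℤ k

/-- The fundamental quasisymmetric function `L_{I,n}` (with positions 0-indexed):
its coefficient at a monomial `d` is the number of weakly increasing `n`-tuples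
`(i_0, …, i_{n-1})` of positive integers, strictly increasing at the positions in `I`,
whose associated monomial `x_{i_0} ⋯ x_{i_{n-1}}` is `d`. -/
def Lfun (n : ℕ) (I : Set ℕ) : MvPowerSeries ℕ+ ℤ :=
  fun d =>
    ((Set.ncard {i : Fin n → ℕ+ |
        Monotone i ∧
        (∀ (p : ℕ) (h : p + 1 < n), p ∈ I → i ⟨p, Nat.lt_of_succ_lt h⟩ < i ⟨p + 1, h⟩) ∧
        (∑ k : Fin n, Finsupp.single (i k) 1) = d}) : ℤ)

/-- The descent set `Des(w, D)` (0-indexed) of the `V`-listing `w = (e 0, e 1, …, e (n-1))`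
with respect to the digraph with arc set `A`. -/
def descents {V : Type} (A : Set (V × V)) {n : ℕ} (e : Fin n ≃ V) : Set ℕ :=
  {p | ∃ h : p + 1 < n, (e ⟨p, Nat.lt_of_succ_lt h⟩, e ⟨p + 1, h⟩) ∈ A}

/-- The Redei–Berge symmetric function `U_D` of the digraph `D = (V, A)`. -/
def redeiBerge (V : Type) [Fintype V] [DecidableEq V] (A : Set (V × V)) :
    MvPowerSeries ℕ+ ℤ :=
  ∑ e : Fin (Fintype.card V) ≃ V, Lfun (Fintype.card V) (descents A e)

/-- The cycles of a permutation `σ`, each represented by its set of entries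
(i.e. by the corresponding orbit of `σ`). -/
def cyclesOf {V : Type} [Fintype V] [DecidableEq V] (σ : Equiv.Perm V) :
    Finset (Finset V) :=
  Finset.univ.image fun v => Finset.univ.filter fun u => σ.SameCycle v u

/-- `p_{type σ}`: the product of `p_{ℓ(γ)}` over all cycles `γ` of `σ`. -/
def pType {V : Type} [Fintype V] [DecidableEq V] (σ : Equiv.Perm V) :
    MvPowerSeries ℕ+ ℤ :=
  ∏ O ∈ cyclesOf σ, pSum O.card

/-- `φ(σ) = ∑ (ℓ(γ) - 1)`, summed over all cycles `γ` of `σ` that are `D`-cycles.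
A cycle of `σ` with orbit `O` is a `D`-cycle iff all its cyclic arcs `(u, σ u)`
(for `u ∈ O`) lie in `A`. -/
def phi {V : Type} [Fintype V] [DecidableEq V] (A : Set (V × V)) (σ : Equiv.Perm V) : ℕ :=
  ∑ O ∈ (cyclesOf σ).filter (fun O => ∀ u ∈ O, (u, σ u) ∈ A), (O.card - 1)

/-- `σ ∈ S_V(D, D̄)`: each cycle of `σ` is a `D`-cycle or a `D̄`-cycle. -/
def memSVDDbar {V : Type} [Fintype V] [DecidableEq V] (A : Set (V × V))
    (σ : Equiv.Perm V) : Prop :=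
  ∀ O ∈ cyclesOf σ, (∀ u ∈ O, (u, σ u) ∈ A) ∨ (∀ u ∈ O, (u, σ u) ∉ A)

/-- `σ ∈ S_V(D)`: each nontrivial cycle of `σ` is a `D`-cycle. -/
def memSVD {V : Type} [Fintype V] [DecidableEq V] (A : Set (V × V))
    (σ : Equiv.Perm V) : Prop :=
  ∀ O ∈ cyclesOf σ, 1 < O.card → ∀ u ∈ O, (u, σ u) ∈ A

/-- `ψ(σ)`: the number of nontrivial cycles of `σ`. -/
def psi {V : Type} [Fintype V] [DecidableEq V] (σ : Equiv.Perm V) : ℕ :=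
  ((cyclesOf σ).filter fun O => 1 < O.card).card

/-- The digraph `(V, A)` is a tournament: no loops, and for any two distinct vertices
`u, v`, exactly one of `(u,v)` and `(v,u)` is an arc. -/
def IsTournament {V : Type} (A : Set (V × V)) : Prop :=
  (∀ u : V, (u, u) ∉ A) ∧ ∀ u v : V, u ≠ v → Xor' ((u, v) ∈ A) ((v, u) ∈ A)

/-- The number of Hamiltonian paths of the digraph `(W, B)` (the empty list counts
as a Hamiltonian path when `W` is empty). -/
def hampCount (W : Type) [Fintype W] (B : Set (W × W)) : ℕ :=
  Set.ncard {w : List W | w.Nodup ∧ (∀ x : W, x ∈ w) ∧ w.Chain' fun a b => (a, b) ∈ B}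

/-- `A_σ = {(v, σ v) : v ∈ V}`. -/
def ApermSet {V : Type} (σ : Equiv.Perm V) : Set (V × V) :=
  Set.range fun v => (v, σ v)

/-- The arc set of a tuple (encoded as a list): the set of its consecutive pairs. -/
def arcsList {V : Type} (p : List V) : Set (V × V) := {a | a ∈ p.zip p.tail}

/-- `C` is a path cover of `V`: a set of paths of `V` (nonempty tuples of distinct
elements) such that each element of `V` belongs to exactly one of these paths. -/
def IsPathCover (V : Type) (C : Set (List V)) : Prop :=
  (∀ p ∈ C, p ≠ [] ∧ p.Nodup) ∧ ∀ v : V, ∃! p, p ∈ C ∧ v ∈ p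

/-- The arc set of a path cover. -/
def arcsCover {V : Type} (C : Set (List V)) : Set (V × V) :=
  ⋃ p ∈ C, arcsList p

/-- A subset `F ⊆ V × V` is linear if it is the arc set of some path cover of `V`. -/
def IsLinear (V : Type) (F : Set (V × V)) : Prop :=
  ∃ C : Set (List V), IsPathCover V C ∧ F = arcsCover C

/-! ### Path generating functions and the transfer-matrix identity -/

section Helpers

variable {V : Type} [Fintype V] [DecidableEq V] {R : Type} [CommRing R]

/-- The `0/1` adjacency matrix of the digraph with arc set `A`, over `R`. -/
def adj (R : Type) [CommRing R] (A : Set (V × V)) : Matrix V V R :=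
  Matrix.of fun u v => if (u, v) ∈ A then 1 else 0

/-- The set of all paths of the digraph with arc set `A`, the empty one included. -/
def paths (A : Set (V × V)) : Finset (List V) :=
  ((Finset.univ : Finset {l : List V // l.Nodup}).map (Function.Embedding.subtype _)).filter
    fun w => w.IsChain fun a b => (a, b) ∈ A

lemma mem_paths (A : Set (V × V)) (w : List V) :
    w ∈ paths A ↔ w.Nodup ∧ w.IsChain fun a b => (a, b) ∈ A := by
  simp [paths]

/-- The generating function of all paths, a path being weighted by the product of the
variables `t v` of its vertices. -/
def pathGF (A : Set (V × V)) (t : V → R) : R := ∑ w ∈ paths A, (w.map t).prod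

/-- The generating function of the paths starting at `u`. -/
def pathGFAt (A : Set (V × V)) (t : V → R) (u : V) : R :=
  ∑ w ∈ (paths A).filter (fun w => w.head? = some u), (w.map t).prod

lemma sum_paths_head (A : Set (V × V)) (f : List V → R) :
    ∑ w ∈ paths A, f w =
      f [] + ∑ u, ∑ w ∈ (paths A).filter (fun w => w.head? = some u), f w := by
  rw [← Finset.sum_fiberwise (paths A) (fun w => w.head?) f, Fintype.sum_option]
  congr 1
  rw [Finset.sum_eq_single []]
  · intro b hb hne
    simp_all
  · intro h
    simp [mem_paths] at h

lemma pathGF_eq (A : Set (V × V)) (t : V → R) :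
    pathGF A t = 1 + ∑ u, pathGFAt A t u := by
  rw [pathGF, sum_paths_head]; simp [pathGFAt]

/-- First-step decomposition of the paths starting at `u`. Prepending `u` to a path that
already visits `u` does not give a path, but such terms vanish because `t u ^ 2 = 0`. -/
lemma pathGFAt_eq (A : Set (V × V)) (t : V → R) (ht : ∀ v, t v * t v = 0) (u : V) :
    pathGFAt A t u = t u * (1 + ∑ v, adj R A u v * pathGFAt A t v) := by
  have key : 1 + ∑ v, adj R A u v * pathGFAt A t v =
      ∑ w ∈ paths A, if (∀ y ∈ w.head?, (u, y) ∈ A) then (w.map t).prod else 0 := by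
    rw [sum_paths_head]
    congr 1
    · simp
    · refine Finset.sum_congr rfl fun v _ => ?_
      rw [pathGFAt, Finset.mul_sum]
      refine Finset.sum_congr rfl fun w hw => ?_
      simp only [Finset.mem_filter] at hw
      simp [hw.2, adj]
  rw [key, Finset.mul_sum]
  have h0 : ∀ w ∈ paths A, w ∉ (paths A).filter
        (fun w => u ∉ w ∧ ∀ y ∈ w.head?, (u, y) ∈ A) →
      t u * (if (∀ y ∈ w.head?, (u, y) ∈ A) then (w.map t).prod else 0) = 0 := by
    intro w hw hw'
    simp only [Finset.mem_filter, not_and, hw, true_imp_iff] at hw'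
    split_ifs with h
    · have hu : u ∈ w := by
        by_contra hu
        exact hw' hu h
      obtain ⟨c, hc⟩ := List.dvd_prod (List.mem_map_of_mem (f := t) hu)
      rw [hc, ← mul_assoc, ht, zero_mul]
    · simp
  rw [← Finset.sum_subset (Finset.filter_subset _ _) h0, pathGFAt]
  symm
  refine Finset.sum_bij (fun w _ => u :: w) ?_ ?_ ?_ ?_
  · intro w hw
    simp only [Finset.mem_filter, mem_paths, List.isChain_cons, List.nodup_cons,
      List.head?_cons, and_true] at hw ⊢
    tauto
  · intro a _ b _ h
    simpa using h
  · intro w hw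
    simp only [Finset.mem_filter, mem_paths] at hw
    obtain ⟨⟨h1, h2⟩, h3⟩ := hw
    cases w with
    | nil => simp at h3
    | cons x w =>
      simp only [List.head?_cons, Option.some.injEq] at h3
      subst h3
      rw [List.nodup_cons] at h1
      rw [List.isChain_cons] at h2
      exact ⟨w, by simp only [Finset.mem_filter, mem_paths]; tauto, rfl⟩
  · intro w hw
    simp only [Finset.mem_filter] at hw
    rw [if_pos hw.2.2]
    simp

/-- Transfer-matrix identity: the path generating function times `det (1 - X A)` is
`det (1 - X A + X J)`, where `X` is the diagonal matrix of the `t v` and `J` is the all-ones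
matrix. This is the matrix determinant lemma, the vector `pathGFAt` being the solution `z`
of `(1 - X A) z = X 1`. -/
lemma pathGF_mul_det (A : Set (V × V)) (t : V → R) (ht : ∀ v, t v * t v = 0) :
    (1 - Matrix.diagonal t * adj R A).det * pathGF A t =
      (1 - Matrix.diagonal t * adj R A + Matrix.diagonal t * Matrix.of fun _ _ => 1).det := by
  set z := pathGFAt A t with hz
  have h1 : pathGF A t =
      (1 + Matrix.replicateCol Unit z * Matrix.replicateRow Unit (fun _ : V => (1 : R))).det := by
    rw [Matrix.det_one_add_replicateCol_mul_replicateRow, pathGF_eq]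
    simp [dotProduct, hz]
  rw [h1, ← Matrix.det_mul]
  congr 1
  rw [mul_add, mul_one]
  congr 1
  ext i j
  have hzi := pathGFAt_eq A t ht i
  rw [← hz] at hzi
  rw [← Matrix.mul_assoc, Matrix.mul_apply]
  simp only [Finset.univ_unique, Finset.sum_singleton, Matrix.replicateRow_apply, mul_one,
    Matrix.diagonal_mul, Matrix.of_apply]
  rw [Matrix.sub_mul, Matrix.one_mul, Matrix.sub_apply, Matrix.replicateCol_apply, Matrix.mul_assoc,
    Matrix.diagonal_mul, Matrix.mul_apply]
  simp only [Matrix.replicateCol_apply]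
  rw [hzi]; ring

/-- For a tournament, `1 - X A + X J` equals `(1 + X) (1 + X Aᵀ)`, because `J - A = 1 + Aᵀ`
and `X ^ 2 = 0`. -/
lemma tournament_det (A : Set (V × V)) (hD : IsTournament A) (t : V → R)
    (ht : ∀ v, t v * t v = 0) :
    (1 - Matrix.diagonal t * adj R A + Matrix.diagonal t * Matrix.of fun _ _ => 1).det =
      (∏ v, (1 + t v)) * (1 + Matrix.diagonal t * adj R A).det := by
  have h1 : (1 + Matrix.diagonal t * adj R A).det =
      (1 + Matrix.diagonal t * (adj R A).transpose).det := by
    rw [← Matrix.det_transpose, Matrix.transpose_add, Matrix.transpose_mul,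
      Matrix.transpose_one, Matrix.diagonal_transpose, Matrix.det_one_add_mul_comm]
  have h2 : ∏ v, (1 + t v) = (1 + Matrix.diagonal t).det := by
    rw [← Matrix.diagonal_one, Matrix.diagonal_add, Matrix.det_diagonal]
  rw [h1, h2, ← Matrix.det_mul]
  congr 1
  have h3 : (Matrix.of fun _ _ => 1 : Matrix V V R) = adj R A + 1 + (adj R A).transpose := by
    ext i j
    simp only [adj, Matrix.add_apply, Matrix.transpose_apply, Matrix.of_apply, Matrix.one_apply]
    by_cases hij : i = j
    · subst hij
      simp [hD.1]
    · rcases hD.2 i j hij with ⟨h, h'⟩ | ⟨h, h'⟩ <;> simp [h, h', hij]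
  have h4 : Matrix.diagonal t * Matrix.diagonal t = 0 := by
    rw [Matrix.diagonal_mul_diagonal]
    simp [ht]
  rw [h3, mul_add, mul_add, add_mul, mul_add, mul_add, ← mul_assoc (Matrix.diagonal t), h4]
  simp only [mul_one, one_mul, zero_mul]
  abel

/-! ### Permutations weighted by their cycles -/

/-- The weight of a permutation: the product over its moved points `i` of `t i`, or `0` if
some moved point is not sent along an arc. -/
def wt (A : Set (V × V)) (t : V → R) (σ : Equiv.Perm V) : R :=
  ∏ i ∈ σ.support, t i * adj R A i (σ i)

/-- Leibniz expansion, where fixed points contribute `1` because there are no loops. -/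
lemma det_expand (A : Set (V × V)) (hA : ∀ u : V, (u, u) ∉ A) (t : V → R) (e : R) :
    (1 + e • (Matrix.diagonal t * adj R A)).det =
      ∑ σ : Equiv.Perm V, ((Equiv.Perm.sign σ : ℤ) : R) * (e ^ σ.support.card * wt A t σ) := by
  rw [← Matrix.det_transpose, Matrix.det_apply']
  refine Finset.sum_congr rfl fun σ _ => ?_
  congr 1
  rw [wt, ← Finset.prod_const, ← Finset.prod_mul_distrib]
  simp only [Matrix.transpose_apply, Matrix.add_apply, Matrix.smul_apply, Matrix.diagonal_mul,
    smul_eq_mul]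
  rw [← Finset.prod_subset (Finset.subset_univ σ.support)]
  · refine Finset.prod_congr rfl fun i hi => ?_
    rw [Matrix.one_apply_ne (Ne.symm (Equiv.Perm.mem_support.1 hi)), zero_add]
  · intro i _ hi
    rw [Equiv.Perm.notMem_support] at hi
    rw [hi]
    simp [adj, hA]

lemma wt_mul_of_disjoint (A : Set (V × V)) (t : V → R) {σ τ : Equiv.Perm V}
    (h : σ.Disjoint τ) : wt A t (σ * τ) = wt A t σ * wt A t τ := by
  rw [wt, h.support_mul,
    Finset.prod_union (Equiv.Perm.disjoint_iff_disjoint_support.1 h), wt, wt]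
  congr 1
  · refine Finset.prod_congr rfl fun i hi => ?_
    have : τ i = i := (h i).resolve_left (Equiv.Perm.mem_support.1 hi)
    simp [this]
  · refine Finset.prod_congr rfl fun i hi => ?_
    have h' : σ (τ i) = τ i :=
      (h (τ i)).resolve_right fun h2 => Equiv.Perm.mem_support.1 hi (τ.injective h2)
    simp [h']

lemma wt_mul_of_not_disjoint (A : Set (V × V)) (t : V → R) (ht : ∀ v, t v * t v = 0)
    {σ τ : Equiv.Perm V} (h : ¬ σ.Disjoint τ) : wt A t σ * wt A t τ = 0 := by
  rw [Equiv.Perm.disjoint_iff_disjoint_support, Finset.not_disjoint_iff] at h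
  obtain ⟨i, h1, h2⟩ := h
  obtain ⟨c, hc⟩ := Finset.dvd_prod_of_mem (fun i => t i * adj R A i (σ i)) h1
  obtain ⟨d, hd⟩ := Finset.dvd_prod_of_mem (fun i => t i * adj R A i (τ i)) h2
  rw [wt, wt, hc, hd]
  linear_combination (adj R A i (σ i) * c * adj R A i (τ i) * d) * ht i

/-- All cyclic permutations of odd length. -/
def oddCycles (V : Type) [Fintype V] [DecidableEq V] : Finset (Equiv.Perm V) :=
  Finset.univ.filter fun c => c.IsCycle ∧ Odd c.support.card

/-- The cycles of `τ` are the cyclic permutations that can be split off `τ`. -/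
lemma mem_cycleFactors_iff_disjoint (c τ : Equiv.Perm V) (hc : c.IsCycle) :
    c.Disjoint (c⁻¹ * τ) ↔ c ∈ τ.cycleFactorsFinset := by
  constructor
  · intro h
    have := h.cycleFactorsFinset_mul_eq_union
    rw [mul_inv_cancel_left, hc.cycleFactorsFinset_eq_singleton] at this
    rw [this]
    simp
  · intro h
    have h1 := Equiv.Perm.disjoint_mul_inv_of_mem_cycleFactorsFinset h
    have h2 : c⁻¹ * τ = τ * c⁻¹ := by
      have h3 := h1.commute.eq
      rw [inv_mul_cancel_right] at h3
      rw [inv_mul_eq_iff_eq_mul]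
      exact h3
    rw [h2]
    exact h1.symm

/-- The number of odd cycles of a permutation has the parity of the size of its support. -/
lemma odd_card_oddCycles (τ : Equiv.Perm V) :
    Odd ((oddCycles V).filter fun c => c ∈ τ.cycleFactorsFinset).card ↔
      Odd τ.support.card := by
  rw [← Equiv.Perm.sum_cycleType, Equiv.Perm.cycleType_def]
  change _ ↔ Odd (∑ c ∈ τ.cycleFactorsFinset, c.support.card)
  rw [Finset.odd_sum_iff_odd_card_odd]
  have : (oddCycles V).filter (fun c => c ∈ τ.cycleFactorsFinset) =
      τ.cycleFactorsFinset.filter fun c => Odd c.support.card := by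
    ext c
    simp only [oddCycles, Finset.mem_filter, Finset.mem_univ, true_and]
    constructor
    · tauto
    · intro h
      exact ⟨⟨(Equiv.Perm.mem_cycleFactorsFinset_iff.1 h.1).1, h.2⟩, h.1⟩
  rw [this]

/-- The generating function of the nontrivial odd cycles of the digraph (cyclic permutations
using a pair outside `A` have weight zero). -/
def oddGF (A : Set (V × V)) (t : V → R) : R := ∑ c ∈ oddCycles V, wt A t c

/-- Multiplying by `oddGF` marks an odd cycle: products of overlapping permutations have weight
zero, and a disjoint pair `(c, σ)` is the permutation `c * σ` together with one of its odd
cycles. -/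
lemma oddGF_mul (A : Set (V × V)) (t : V → R) (ht : ∀ v, t v * t v = 0) :
    oddGF A t * ∑ σ, wt A t σ =
      ∑ τ, (((oddCycles V).filter fun c => c ∈ τ.cycleFactorsFinset).card : R) * wt A t τ := by
  have h : ∀ c ∈ oddCycles V, wt A t c * ∑ σ, wt A t σ =
      ∑ τ, if c ∈ τ.cycleFactorsFinset then wt A t τ else 0 := by
    intro c hc
    simp only [oddCycles, Finset.mem_filter, Finset.mem_univ, true_and] at hc
    rw [← Equiv.sum_comp (Equiv.mulLeft c⁻¹), Finset.mul_sum]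
    refine Finset.sum_congr rfl fun τ _ => ?_
    simp only [Equiv.coe_mulLeft, ← mem_cycleFactors_iff_disjoint c τ hc.1]
    split_ifs with hd
    · rw [← wt_mul_of_disjoint A t hd, mul_inv_cancel_left]
    · exact wt_mul_of_not_disjoint A t ht hd
  rw [oddGF, Finset.sum_mul, Finset.sum_congr rfl h, Finset.sum_comm]
  refine Finset.sum_congr rfl fun τ _ => ?_
  rw [← Finset.sum_filter, Finset.sum_const, nsmul_eq_mul]

lemma two_mul_sign (h4 : (4 : R) = 0) (σ : Equiv.Perm V) (x : R) :
    2 * (((Equiv.Perm.sign σ : ℤ) : R) * x) = 2 * x := by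
  rcases Int.units_eq_one_or (Equiv.Perm.sign σ) with h | h <;> rw [h]
  · simp
  · push_cast
    linear_combination (-x) * h4

/-! ### The two determinants modulo 4 -/

/-- Modulo `4`, `det (1 + X A) = det (1 - X A) (1 + 2 C)` with `C = oddGF A t`. In the
Leibniz expansions, the difference of the two determinants is twice the sum over the permutations
with support of odd size, and `oddGF_mul` shows that `2 C det (1 - X A)` is the same sum because
the number of odd cycles has the parity of the size of the support. -/
lemma det_add_eq (A : Set (V × V)) (hA : ∀ u : V, (u, u) ∉ A) (t : V → R)
    (ht : ∀ v, t v * t v = 0) (h4 : (4 : R) = 0) :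
    (1 + Matrix.diagonal t * adj R A).det =
      (1 - Matrix.diagonal t * adj R A).det * (1 + 2 * oddGF A t) := by
  have hP := det_expand A hA t 1
  have hQ := det_expand A hA t (-1)
  rw [one_smul] at hP
  rw [neg_one_smul, ← sub_eq_add_neg] at hQ
  -- Signs are irrelevant after multiplication by `2`.
  have h2Q : 2 * (1 - Matrix.diagonal t * adj R A).det = 2 * ∑ σ, wt A t σ := by
    rw [hQ, Finset.mul_sum, Finset.mul_sum]
    refine Finset.sum_congr rfl fun σ _ => ?_
    rw [two_mul_sign h4]
    rcases neg_one_pow_eq_or R σ.support.card with h | h <;> rw [h]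
    · ring
    · linear_combination (-wt A t σ) * h4
  have hC : (1 - Matrix.diagonal t * adj R A).det * (1 + 2 * oddGF A t) =
      (1 - Matrix.diagonal t * adj R A).det + 2 * (oddGF A t * ∑ σ, wt A t σ) := by
    linear_combination oddGF A t * h2Q
  rw [hC, oddGF_mul A t ht, hP, hQ, Finset.mul_sum, ← Finset.sum_add_distrib]
  refine Finset.sum_congr rfl fun σ _ => ?_
  have hpar := odd_card_oddCycles σ
  rcases Nat.even_or_odd σ.support.card with h | h
  · have h' := Nat.not_odd_iff_even.1 (fun h' => Nat.not_even_iff_odd.2 (hpar.1 h') h)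
    obtain ⟨k, hk⟩ := h'
    rw [hk, h.neg_one_pow]
    push_cast
    linear_combination (-(k : R) * wt A t σ) * h4
  · obtain ⟨k, hk⟩ := hpar.2 h
    rw [hk, h.neg_one_pow]
    push_cast
    have := two_mul_sign h4 σ (wt A t σ)
    linear_combination this - ((k : R) * wt A t σ) * h4

/-- The identity permutation contributes `1` to the determinant, the others nilpotents. -/
lemma isUnit_det (A : Set (V × V)) (hA : ∀ u : V, (u, u) ∉ A) (t : V → R)
    (ht : ∀ v, t v * t v = 0) : IsUnit (1 - Matrix.diagonal t * adj R A).det := by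
  have hQ := det_expand A hA t (-1)
  rw [neg_one_smul, ← sub_eq_add_neg] at hQ
  rw [hQ, Fintype.sum_eq_add_sum_compl 1]
  simp only [Equiv.Perm.sign_one, Equiv.Perm.support_one, wt, Finset.card_empty,
    Finset.prod_empty, pow_zero, Units.val_one, Int.cast_one, mul_one]
  refine IsNilpotent.isUnit_one_add (isNilpotent_sum fun σ hσ => ⟨2, ?_⟩)
  have h1 : σ ≠ 1 := by simpa using hσ
  have h2 : ¬ σ.Disjoint σ := fun h => h1 (Equiv.Perm.disjoint_refl_iff.1 h)
  have h3 := wt_mul_of_not_disjoint A t ht h2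
  rw [wt] at h3
  rw [mul_pow, mul_pow, pow_two (∏ i ∈ σ.support, _), h3, mul_zero, mul_zero]

/-- Modulo `4` and squares of the variables, the path generating function of a tournament is
`∏ (1 + t v) * (1 + 2 C)`, where `C` is the generating function of the odd cycles. -/
lemma pathGF_tournament (A : Set (V × V)) (hD : IsTournament A) (t : V → R)
    (ht : ∀ v, t v * t v = 0) (h4 : (4 : R) = 0) :
    pathGF A t = (∏ v, (1 + t v)) * (1 + 2 * oddGF A t) := by
  apply (isUnit_det A hD.1 t ht).mul_left_cancel
  rw [pathGF_mul_det A t ht, tournament_det A hD t ht, det_add_eq A hD.1 t ht h4]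
  ring

/-! ### Coefficient extraction -/

/-- There is a commutative ring of characteristic dividing `4` with square-zero elements
`t v`, and an additive functional on it extracting the coefficient of `∏ t v`. -/
lemma exists_ring (V : Type) [Fintype V] [DecidableEq V] :
    ∃ (R : Type) (_ : CommRing R) (t : V → R) (φ : R →+ ZMod 4),
      (4 : R) = 0 ∧ (∀ v, t v * t v = 0) ∧
      ∀ S T : Finset V, φ ((∏ i ∈ S, t i) * ∏ i ∈ T, t i) = if T = Sᶜ then 1 else 0 := by
  let I : Ideal (MvPolynomial V (ZMod 4)) :=
    Ideal.span ((fun s => MvPolynomial.monomial s 1) '' Set.range fun v => Finsupp.single v 2)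
  let d : V →₀ ℕ := Finsupp.equivFunOnFinite.symm fun _ => 1
  let φ₀ : MvPolynomial V (ZMod 4) →+ ZMod 4 := (MvPolynomial.lcoeff (ZMod 4) d).toAddMonoidHom
  have hφ₀ : ∀ p, φ₀ p = MvPolynomial.coeff d p := fun p => rfl
  have hI : ∀ p ∈ I, φ₀ p = 0 := by
    intro p hp
    rw [hφ₀]
    by_contra h
    obtain ⟨_, ⟨v, rfl⟩, hv⟩ := MvPolynomial.mem_ideal_span_monomial_image.1 hp d
      (MvPolynomial.mem_support_iff.2 h)
    have := hv v
    simp [d] at this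
  refine ⟨MvPolynomial V (ZMod 4) ⧸ I, inferInstance,
    fun v => Ideal.Quotient.mk I (MvPolynomial.X v),
    QuotientAddGroup.lift I.toAddSubgroup φ₀ hI, ?_, ?_, ?_⟩
  · have : (4 : MvPolynomial V (ZMod 4)) = 0 := by
      have h : (4 : ZMod 4) = 0 := rfl
      rw [← map_ofNat (MvPolynomial.C (σ := V) (R := ZMod 4)) 4, h, map_zero]
    rw [← map_ofNat (Ideal.Quotient.mk I) 4, this, map_zero]
  · intro v
    rw [← map_mul, Ideal.Quotient.eq_zero_iff_mem]
    refine Ideal.subset_span ⟨_, ⟨v, rfl⟩, ?_⟩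
    simp [MvPolynomial.X, MvPolynomial.monomial_mul, ← Finsupp.single_add]
  · intro S T
    have hmon : ∀ S : Finset V, ∏ i ∈ S, (MvPolynomial.X i : MvPolynomial V (ZMod 4)) =
        MvPolynomial.monomial (∑ i ∈ S, Finsupp.single i 1) 1 := by
      intro S
      rw [MvPolynomial.monomial_sum_one]
      rfl
    rw [← map_prod, ← map_prod, ← map_mul]
    change φ₀ _ = _
    rw [hφ₀, hmon, hmon, MvPolynomial.monomial_mul, MvPolynomial.coeff_monomial, mul_one]
    congr 1
    simp only [eq_iff_iff, DFunLike.ext_iff, Finset.ext_iff]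
    refine forall_congr' fun v => ?_
    by_cases h1 : v ∈ S <;> by_cases h2 : v ∈ T <;>
      simp [d, Finsupp.single_apply, h1, h2]

end Helpers

/-- **Theorem (mod-4 refinement of Redei's theorem).** For a tournament `D`,
`#hamps(D) ≡ 1 + 2 · #(nontrivial odd D-cycles) (mod 4)`.
(Nontrivial `D`-cycles, i.e. those of length `> 1`, correspond bijectively to cyclic
permutations `c` with `(u, c u) ∈ A` for all `u` in the support of `c`; the length of
the `D`-cycle is the cardinality of the support.) -/
theorem redei_mod_four (V : Type) [Fintype V] [DecidableEq V]
    (A : Set (V × V)) (hD : IsTournament A) :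
    hampCount V A ≡
      1 + 2 * Set.ncard {c : Equiv.Perm V |
        c.IsCycle ∧ Odd c.support.card ∧ ∀ u ∈ c.support, (u, c u) ∈ A} [MOD 4] := by
  obtain ⟨R, _, t, φ, h4, ht, hφ⟩ := exists_ring V
  have hone : ∀ S : Finset V, φ (∏ i ∈ S, t i) = if S = Finset.univ then 1 else 0 := by
    intro S
    simpa using hφ ∅ S
  have hmain := congrArg φ (pathGF_tournament A hD t ht h4)
  -- The coefficient of `∏ t v` in the path generating function counts Hamiltonian paths.
  have hL : φ (pathGF A t) = (hampCount V A : ZMod 4) := by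
    have hset : {w : List V | w.Nodup ∧ (∀ x : V, x ∈ w) ∧ w.Chain' fun a b => (a, b) ∈ A} =
        ((paths A).filter fun w => w.toFinset = Finset.univ : Finset (List V)) := by
      ext w
      simp only [Set.mem_ofPred_eq, Finset.coe_filter, mem_paths, Finset.ext_iff,
        List.mem_toFinset, Finset.mem_univ, iff_true]
      tauto
    rw [hampCount, hset, Set.ncard_coe_finset, pathGF, map_sum, Finset.card_filter, Nat.cast_sum]
    refine Finset.sum_congr rfl fun w hw => ?_
    rw [← List.prod_toFinset t ((mem_paths A w).1 hw).1, hone]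
    push_cast
    rfl
  -- Multiplying the monomial of `S` by `∏ (1 + t v)` completes it in exactly one way.
  have hfill : ∀ S : Finset V, φ ((∏ i ∈ S, t i) * ∏ v, (1 + t v)) = 1 := by
    intro S
    rw [Finset.prod_one_add, Finset.mul_sum, map_sum]
    simp [hφ]
  have hwt : ∀ c : Equiv.Perm V, φ (wt A t c * ∏ v, (1 + t v)) =
      if ∀ u ∈ c.support, (u, c u) ∈ A then 1 else 0 := by
    intro c
    split_ifs with h
    · rw [wt, Finset.prod_congr rfl (g := t), hfill]
      intro i hi
      simp [adj, h i hi]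
    · push Not at h
      obtain ⟨u, hu, hu'⟩ := h
      rw [wt, Finset.prod_eq_zero hu, zero_mul, map_zero]
      simp [adj, hu']
  have hset : {c : Equiv.Perm V |
      c.IsCycle ∧ Odd c.support.card ∧ ∀ u ∈ c.support, (u, c u) ∈ A} =
      ((oddCycles V).filter fun c => ∀ u ∈ c.support, (u, c u) ∈ A : Finset (Equiv.Perm V)) := by
    ext c
    simp only [oddCycles, Set.mem_ofPred_eq, Finset.coe_filter, Finset.mem_filter,
      Finset.mem_univ, true_and, and_assoc]
  have hR : φ ((∏ v, (1 + t v)) * (1 + 2 * oddGF A t)) =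
      1 + 2 * (((oddCycles V).filter fun c => ∀ u ∈ c.support, (u, c u) ∈ A).card : ZMod 4) := by
    have e : (∏ v, (1 + t v)) * (1 + 2 * oddGF A t) =
        (∏ i ∈ (∅ : Finset V), t i) * (∏ v, (1 + t v)) +
          (oddGF A t * ∏ v, (1 + t v) + oddGF A t * ∏ v, (1 + t v)) := by
      rw [Finset.prod_empty]; ring
    have hc : φ (oddGF A t * ∏ v, (1 + t v)) =
        (((oddCycles V).filter fun c => ∀ u ∈ c.support, (u, c u) ∈ A).card : ZMod 4) := by
      rw [oddGF, Finset.sum_mul, map_sum, Finset.card_filter, Nat.cast_sum]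
      refine Finset.sum_congr rfl fun c _ => ?_
      rw [hwt]
      push_cast
      rfl
    rw [e, map_add, map_add, hfill, hc]
    ring
  rw [hL, hR] at hmain
  rw [hset, Set.ncard_coe_finset, ← ZMod.natCast_eq_natCast_iff, hmain]
  push_cast
  rfl
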